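/- Assume the ground truth reward r_G satisfies the reward structure assumption, the feature vectors satisfy the positive-inner-product feature assumption, and ‖φ(y_med)‖² < s < ‖φ(y_⋆)‖². Suppose θ_t evolves by gradient flow maximizing V_G. Then for all t ≥ 0, d/dt π_{θ_t}(Y_bad) ≤ 0 and d/dt π_{θ_t}(y_⋆) ≥ 0; that is, the total probability of the bad outputs is non-increasing and the probability of the optimal output y_⋆ is non-decreasing along the gradient flow. -/

import Mathlib

open scoped BigOperators RealInnerProductSpace

noncomputable def policy {Y : Type*} [Fintype Y] {D : ℕ}
    (φ : Y → EuclideanSpace ℝ (Fin D)) (θ : EuclideanSpace ℝ (Fin D)) (y : Y) : ℝ :=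
  Real.exp ⟪φ y, θ⟫ / ∑ z, Real.exp ⟪φ z, θ⟫

noncomputable def expReward {Y : Type*} [Fintype Y] {D : ℕ}
    (φ : Y → EuclideanSpace ℝ (Fin D)) (r : Y → ℝ) (θ : EuclideanSpace ℝ (Fin D)) : ℝ :=
  ∑ y, policy φ θ y * r y

/-!
Along a curve `θ` of parameters, each logit `⟪φ y, θ⟫` has a velocity `v y`, and `policy φ θ y`
changes at the rate `policy φ θ y * (v y - 𝔼 v)`, the expectation being under the policy. So the
mass of a set of outputs decreases as soon as some threshold separates the velocities inside the
set from the larger ones outside it.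

Put `V = 𝔼 r` and `A y = policy φ θ y * (r y - V)`. Then `∇V = ∑ y, A y • φ y`, and along the flow
`v y = ⟪φ y, ∇V⟫`. Bad outputs have minimal reward, so their `A` is nonpositive, and as they only
interact with one another, with nonnegative inner products, so is their velocity. What acts on
`u = φ ystar` and `m = φ ymed` is the component `α • u + β • m` of the gradient, where
`α = A ystar` and `β = A ymed`. Here `0 ≤ α` and `0 ≤ α + β`, although `β` may be negative, and
* `⟪m, α • u + β • m⟫ = α * (⟪u, m⟫ - ‖m‖ ^ 2) + (α + β) * ‖m‖ ^ 2`,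
* `⟪u - m, α • u + β • m⟫ = α * ‖u - m‖ ^ 2 + (α + β) * (⟪u, m⟫ - ‖m‖ ^ 2)`,

whence `v y ≤ 0 ≤ v ymed ≤ v ystar` for every bad `y`.
-/

section MonotoneOn

variable {f : ℝ → ℝ} {s : Set ℝ}

theorem monotoneOn_of_exists_hasDerivAt_nonneg (hs : Convex ℝ s)
    (hf : ∀ t ∈ s, ∃ d, HasDerivAt f d t ∧ 0 ≤ d) : MonotoneOn f s := by
  have hderiv : ∀ t ∈ s, HasDerivAt f (deriv f t) t ∧ 0 ≤ deriv f t := by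
    intro t ht
    obtain ⟨d, hd, hd0⟩ := hf t ht
    exact hd.deriv.symm ▸ ⟨hd, hd0⟩
  exact monotoneOn_of_deriv_nonneg hs
    (fun t ht ↦ (hderiv t ht).1.continuousAt.continuousWithinAt)
    (fun t ht ↦ (hderiv t (interior_subset ht)).1.differentiableAt.differentiableWithinAt)
    (fun t ht ↦ (hderiv t (interior_subset ht)).2)

theorem antitoneOn_of_exists_hasDerivAt_nonpos (hs : Convex ℝ s)
    (hf : ∀ t ∈ s, ∃ d, HasDerivAt f d t ∧ d ≤ 0) : AntitoneOn f s := by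
  have hneg : MonotoneOn (-f) s := monotoneOn_of_exists_hasDerivAt_nonneg hs fun t ht ↦
    let ⟨d, hd, hd0⟩ := hf t ht
    ⟨-d, hd.neg, neg_nonneg.2 hd0⟩
  exact neg_neg f ▸ hneg.neg

end MonotoneOn

section InnerProduct

variable {E : Type*} [NormedAddCommGroup E] [InnerProductSpace ℝ E] {u m : E} {α β : ℝ}

theorem inner_smul_add_smul_right_nonneg (hm : ‖m‖ ^ 2 ≤ ⟪u, m⟫) (hα : 0 ≤ α)
    (hαβ : 0 ≤ α + β) : 0 ≤ ⟪m, α • u + β • m⟫ := by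
  calc 0 ≤ α * (⟪u, m⟫ - ‖m‖ ^ 2) + (α + β) * ‖m‖ ^ 2 :=
        add_nonneg (mul_nonneg hα (sub_nonneg.2 hm)) (mul_nonneg hαβ (sq_nonneg _))
    _ = ⟪m, α • u + β • m⟫ := by
        rw [inner_add_right, real_inner_smul_right, real_inner_smul_right,
          real_inner_self_eq_norm_sq, real_inner_comm u m]
        ring

theorem inner_smul_add_smul_right_le (hm : ‖m‖ ^ 2 ≤ ⟪u, m⟫) (hα : 0 ≤ α)
    (hαβ : 0 ≤ α + β) : ⟪m, α • u + β • m⟫ ≤ ⟪u, α • u + β • m⟫ := by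
  rw [← sub_nonneg, ← inner_sub_left]
  calc 0 ≤ α * ‖u - m‖ ^ 2 + (α + β) * (⟪u, m⟫ - ‖m‖ ^ 2) :=
        add_nonneg (mul_nonneg hα (sq_nonneg _)) (mul_nonneg hαβ (sub_nonneg.2 hm))
    _ = α * ⟪u - m, u - m⟫ + (α + β) * ⟪u - m, m⟫ := by
        rw [real_inner_self_eq_norm_sq, inner_sub_left u m m, real_inner_self_eq_norm_sq]
    _ = ⟪u - m, α • u + β • m⟫ := by
        simp only [inner_add_right, real_inner_smul_right, inner_sub_right]
        ring

theorem hasGradientAt_exp_inner [CompleteSpace E] (a x : E) :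
    HasGradientAt (fun x ↦ Real.exp ⟪a, x⟫) (Real.exp ⟪a, x⟫ • a) x := by
  rw [hasGradientAt_iff_hasFDerivAt, map_smul]
  exact (innerSL ℝ a).hasFDerivAt.exp

end InnerProduct

section Policy

variable {Y : Type*} [Fintype Y] {D : ℕ} (φ : Y → EuclideanSpace ℝ (Fin D)) (r : Y → ℝ)
  (θ : EuclideanSpace ℝ (Fin D))

theorem sum_exp_inner_pos [Nonempty Y] : 0 < ∑ z, Real.exp ⟪φ z, θ⟫ :=
  Finset.sum_pos (fun _ _ ↦ Real.exp_pos _) Finset.univ_nonempty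

theorem policy_nonneg (y : Y) : 0 ≤ policy φ θ y :=
  div_nonneg (Real.exp_pos _).le (Finset.sum_nonneg fun _ _ ↦ (Real.exp_pos _).le)

theorem sum_policy [Nonempty Y] : ∑ y, policy φ θ y = 1 := by
  simp only [policy]
  rw [← Finset.sum_div, div_self (sum_exp_inner_pos φ θ).ne']

/-- The advantage `r y - 𝔼 r` of the output `y` over the expected reward, weighted by the
probability of `y`. It gives both the coefficients of the policy gradient and, with logit
velocities in place of rewards, the rates of change of the probabilities. -/
noncomputable def weightedAdvantage (y : Y) : ℝ :=
  policy φ θ y * (r y - expReward φ r θ)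

theorem sum_weightedAdvantage [Nonempty Y] : ∑ y, weightedAdvantage φ r θ y = 0 := by
  simp only [weightedAdvantage, mul_sub, Finset.sum_sub_distrib]
  rw [← Finset.sum_mul, sum_policy, one_mul]
  exact sub_self _

section Sign

variable {φ r θ} {Z : Finset Y} {c : ℝ}

theorem sum_weightedAdvantage_nonpos [Nonempty Y] (hZ : ∀ y ∈ Z, r y ≤ c) (hZc : ∀ y ∉ Z, c ≤ r y) :
    ∑ y ∈ Z, weightedAdvantage φ r θ y ≤ 0 := by
  classical
  have hp := policy_nonneg φ θ
  have hmass : ∑ y ∈ Z, policy φ θ y + ∑ y ∈ Zᶜ, policy φ θ y = 1 :=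
    (Finset.sum_add_sum_compl Z _).trans (sum_policy φ θ)
  have hmean : expReward φ r θ - c
      = ∑ y ∈ Z, policy φ θ y * (r y - c) + ∑ y ∈ Zᶜ, policy φ θ y * (r y - c) := by
    rw [Finset.sum_add_sum_compl]
    simp only [mul_sub, Finset.sum_sub_distrib, ← Finset.sum_mul, sum_policy, one_mul]
    rfl
  have hin : ∑ y ∈ Z, policy φ θ y * (r y - c) ≤ 0 :=
    Finset.sum_nonpos fun y hy ↦ mul_nonpos_of_nonneg_of_nonpos (hp y) (sub_nonpos.2 (hZ y hy))
  have hout : 0 ≤ ∑ y ∈ Zᶜ, policy φ θ y * (r y - c) :=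
    Finset.sum_nonneg fun y hy ↦
      mul_nonneg (hp y) (sub_nonneg.2 (hZc y (Finset.mem_compl.1 hy)))
  calc ∑ y ∈ Z, weightedAdvantage φ r θ y
      = ∑ y ∈ Z, policy φ θ y * (r y - c) - (∑ y ∈ Z, policy φ θ y) * (expReward φ r θ - c) := by
        rw [Finset.sum_mul, ← Finset.sum_sub_distrib]
        exact Finset.sum_congr rfl fun y _ ↦ by rw [weightedAdvantage]; ring
    _ = (∑ y ∈ Zᶜ, policy φ θ y) * ∑ y ∈ Z, policy φ θ y * (r y - c)
          - (∑ y ∈ Z, policy φ θ y) * ∑ y ∈ Zᶜ, policy φ θ y * (r y - c) := by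
        rw [hmean, eq_sub_of_add_eq' hmass]
        ring
    _ ≤ 0 := sub_nonpos.2 <|
        (mul_nonpos_of_nonneg_of_nonpos (Finset.sum_nonneg fun y _ ↦ hp y) hin).trans
          (mul_nonneg (Finset.sum_nonneg fun y _ ↦ hp y) hout)

theorem sum_weightedAdvantage_nonneg [Nonempty Y] (hZ : ∀ y ∈ Z, c ≤ r y) (hZc : ∀ y ∉ Z, r y ≤ c) :
    0 ≤ ∑ y ∈ Z, weightedAdvantage φ r θ y := by
  classical
  have hcompl : ∑ y ∈ Zᶜ, weightedAdvantage φ r θ y ≤ 0 :=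
    sum_weightedAdvantage_nonpos (fun y hy ↦ hZc y (Finset.mem_compl.1 hy))
      fun y hy ↦ hZ y (by simpa using hy)
  have htotal := (Finset.sum_add_sum_compl Z _).trans (sum_weightedAdvantage φ r θ)
  linarith

theorem weightedAdvantage_nonpos {y : Y} (hy : ∀ z, r y ≤ r z) :
    weightedAdvantage φ r θ y ≤ 0 := by
  have : Nonempty Y := ⟨y⟩
  simpa using sum_weightedAdvantage_nonpos (φ := φ) (θ := θ) (Z := {y}) (c := r y) (by simp)
    fun z _ ↦ hy z

theorem weightedAdvantage_nonneg {y : Y} (hy : ∀ z, r z ≤ r y) :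
    0 ≤ weightedAdvantage φ r θ y := by
  have : Nonempty Y := ⟨y⟩
  simpa using sum_weightedAdvantage_nonneg (φ := φ) (θ := θ) (Z := {y}) (c := r y) (by simp)
    fun z _ ↦ hy z

theorem weightedAdvantage_add_nonneg {a b : Y} (hab : a ≠ b) (hba : r b ≤ r a)
    (hr : ∀ y, y ≠ a → y ≠ b → r y ≤ r b) :
    0 ≤ weightedAdvantage φ r θ a + weightedAdvantage φ r θ b := by
  classical
  have : Nonempty Y := ⟨a⟩
  rw [← Finset.sum_pair hab]
  exact sum_weightedAdvantage_nonneg (c := r b) (by simp [hba]) (by simpa using hr)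

end Sign

section Derivative

theorem hasGradientAt_log_sum_exp_inner [Nonempty Y] :
    HasGradientAt (fun θ ↦ Real.log (∑ z, Real.exp ⟪φ z, θ⟫)) (∑ z, policy φ θ z • φ z) θ := by
  have hsum : HasFDerivAt (fun θ ↦ ∑ z, Real.exp ⟪φ z, θ⟫) _ θ :=
    HasFDerivAt.fun_sum fun z _ ↦ (hasGradientAt_exp_inner (φ z) θ).hasFDerivAt
  refine hasGradientAt_iff_hasFDerivAt.2
    ((hsum.log (sum_exp_inner_pos φ θ).ne').congr_fderiv ?_)
  simp only [← map_smul, ← map_sum, Finset.smul_sum, smul_smul, policy, div_eq_inv_mul]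

theorem policy_eq_exp_sub_log (y : Y) :
    policy φ θ y = Real.exp (⟪φ y, θ⟫ - Real.log (∑ z, Real.exp ⟪φ z, θ⟫)) := by
  have : Nonempty Y := ⟨y⟩
  rw [Real.exp_sub, Real.exp_log (sum_exp_inner_pos φ θ), policy]

theorem hasGradientAt_policy (y : Y) :
    HasGradientAt (policy φ · y) (policy φ θ y • (φ y - ∑ z, policy φ θ z • φ z)) θ := by
  have : Nonempty Y := ⟨y⟩
  have hexp := ((innerSL ℝ (φ y)).hasFDerivAt.sub
    (hasGradientAt_log_sum_exp_inner φ θ).hasFDerivAt).exp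
  simp only [policy_eq_exp_sub_log φ _ y]
  rw [hasGradientAt_iff_hasFDerivAt, map_smul, map_sub]
  exact hexp

theorem hasGradientAt_expReward :
    HasGradientAt (expReward φ r) (∑ y, weightedAdvantage φ r θ y • φ y) θ := by
  have hsum : HasFDerivAt (expReward φ r) _ θ := HasFDerivAt.fun_sum fun y _ ↦
    (hasGradientAt_policy φ θ y).hasFDerivAt.mul_const (r y)
  refine hasGradientAt_iff_hasFDerivAt.2 (hsum.congr_fderiv ?_)
  simp only [← map_smul, ← map_sum]
  congr 1
  calc ∑ y, r y • policy φ θ y • (φ y - ∑ z, policy φ θ z • φ z)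
      = ∑ y, (policy φ θ y * r y) • φ y - expReward φ r θ • ∑ y, policy φ θ y • φ y := by
        simp only [smul_sub, smul_smul, Finset.sum_sub_distrib, ← Finset.sum_smul,
          mul_comm (r _), expReward]
    _ = ∑ y, weightedAdvantage φ r θ y • φ y := by
        simp only [Finset.smul_sum, smul_smul, ← Finset.sum_sub_distrib, ← sub_smul,
          mul_comm (expReward φ r θ), ← mul_sub, weightedAdvantage]

variable {φ} {θt : ℝ → EuclideanSpace ℝ (Fin D)} {g : EuclideanSpace ℝ (Fin D)} {t : ℝ}

theorem hasDerivAt_policy_comp (hθ : HasDerivAt θt g t) (y : Y) :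
    HasDerivAt (fun τ ↦ policy φ (θt τ) y)
      (weightedAdvantage φ (fun z ↦ ⟪φ z, g⟫) (θt t) y) t := by
  have h := (hasGradientAt_policy φ (θt t) y).hasFDerivAt.comp_hasDerivAt t hθ
  refine h.congr_deriv ?_
  simp only [InnerProductSpace.toDual_apply_apply, real_inner_smul_left, inner_sub_left, sum_inner]
  rfl

theorem hasDerivAt_sum_policy_comp (hθ : HasDerivAt θt g t) (Z : Finset Y) :
    HasDerivAt (fun τ ↦ ∑ y ∈ Z, policy φ (θt τ) y)
      (∑ y ∈ Z, weightedAdvantage φ (fun z ↦ ⟪φ z, g⟫) (θt t) y) t :=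
  HasDerivAt.fun_sum fun y _ ↦ hasDerivAt_policy_comp hθ y

end Derivative

section Gradient

variable {φ r θ} {Z : Finset Y} {w : EuclideanSpace ℝ (Fin D)} {a b : Y}

theorem inner_gradient_expReward_eq_of_orthogonal (hw : ∀ y ∉ Z, ⟪w, φ y⟫ = 0) :
    ⟪w, gradient (expReward φ r) θ⟫ = ⟪w, ∑ y ∈ Z, weightedAdvantage φ r θ y • φ y⟫ := by
  rw [(hasGradientAt_expReward φ r θ).gradient, inner_sum, inner_sum]
  refine (Finset.sum_subset (Finset.subset_univ Z) fun y _ hy ↦ ?_).symm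
  rw [real_inner_smul_right, hw y hy, mul_zero]

theorem inner_gradient_expReward_nonpos (hr : ∀ y ∈ Z, ∀ z, r y ≤ r z)
    (hw : ∀ y ∈ Z, 0 ≤ ⟪w, φ y⟫) (hw' : ∀ y ∉ Z, ⟪w, φ y⟫ = 0) :
    ⟪w, gradient (expReward φ r) θ⟫ ≤ 0 := by
  rw [inner_gradient_expReward_eq_of_orthogonal hw', inner_sum]
  refine Finset.sum_nonpos fun y hy ↦ ?_
  rw [real_inner_smul_right]
  exact mul_nonpos_of_nonpos_of_nonneg (weightedAdvantage_nonpos (hr y hy)) (hw y hy)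

theorem inner_gradient_expReward_mem_Icc (hab : a ≠ b) (hba : r b ≤ r a)
    (hr : ∀ y, y ≠ a → y ≠ b → r y ≤ r b) (ha : ∀ y, y ≠ a → y ≠ b → ⟪φ a, φ y⟫ = 0)
    (hb : ∀ y, y ≠ a → y ≠ b → ⟪φ b, φ y⟫ = 0) (hnorm : ‖φ b‖ ^ 2 ≤ ⟪φ a, φ b⟫) :
    ⟪φ b, gradient (expReward φ r) θ⟫ ∈ Set.Icc 0 ⟪φ a, gradient (expReward φ r) θ⟫ := by
  classical
  have hmax : ∀ y, r y ≤ r a := fun y ↦ by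
    rcases eq_or_ne y a with rfl | hya
    · exact le_rfl
    rcases eq_or_ne y b with rfl | hyb
    exacts [hba, (hr y hya hyb).trans hba]
  have hα : 0 ≤ weightedAdvantage φ r θ a := weightedAdvantage_nonneg hmax
  have hαβ : 0 ≤ weightedAdvantage φ r θ a + weightedAdvantage φ r θ b :=
    weightedAdvantage_add_nonneg hab hba hr
  have hpair : ∀ w, (∀ y, y ≠ a → y ≠ b → ⟪w, φ y⟫ = 0) → ⟪w, gradient (expReward φ r) θ⟫ =
      ⟪w, weightedAdvantage φ r θ a • φ a + weightedAdvantage φ r θ b • φ b⟫ := fun w hw ↦ by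
    rw [inner_gradient_expReward_eq_of_orthogonal (Z := {a, b}) (by simpa using hw),
      Finset.sum_pair hab]
  rw [hpair _ ha, hpair _ hb]
  exact ⟨inner_smul_add_smul_right_nonneg hnorm hα hαβ,
    inner_smul_add_smul_right_le hnorm hα hαβ⟩

end Gradient

end Policy

theorem pos_inner_monotone_general {Y : Type*} [Fintype Y] {D : ℕ}
    (φ : Y → EuclideanSpace ℝ (Fin D)) (r : Y → ℝ) (ystar ymed : Y) (Ybad : Finset Y)
    (hsm : ystar ≠ ymed) (hsb : ystar ∉ Ybad) (hmb : ymed ∉ Ybad)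
    (hcover : ∀ y, y = ystar ∨ y = ymed ∨ y ∈ Ybad)
    (hmed : r ymed ≤ r ystar) (c : ℝ) (hc : c ≤ r ymed) (hbad : ∀ y ∈ Ybad, r y = c)
    (horth : ∀ b ∈ Ybad, ∀ y ∉ Ybad, ⟪φ b, φ y⟫ = 0)
    (hbad_inner : ∀ b ∈ Ybad, ∀ b' ∈ Ybad, 0 ≤ ⟪φ b, φ b'⟫)
    (hnorm : ‖φ ymed‖ ^ 2 ≤ ⟪φ ystar, φ ymed⟫)
    (θt : ℝ → EuclideanSpace ℝ (Fin D))
    (hflow : ∀ t : ℝ, 0 ≤ t → HasDerivAt θt (gradient (expReward φ r) (θt t)) t) :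
    (∀ t : ℝ, 0 ≤ t →
        (∃ d : ℝ, HasDerivAt (fun τ : ℝ => ∑ y ∈ Ybad, policy φ (θt τ) y) d t ∧ d ≤ 0)
        ∧ ∃ d : ℝ, HasDerivAt (fun τ : ℝ => policy φ (θt τ) ystar) d t ∧ 0 ≤ d)
    ∧ AntitoneOn (fun t : ℝ => ∑ y ∈ Ybad, policy φ (θt t) y) (Set.Ici 0)
    ∧ MonotoneOn (fun t : ℝ => policy φ (θt t) ystar) (Set.Ici 0) := by
  have : Nonempty Y := ⟨ystar⟩
  have hmin : ∀ b ∈ Ybad, ∀ y, r b ≤ r y := fun b hb y ↦ by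
    rw [hbad b hb]
    rcases hcover y with rfl | rfl | hy
    exacts [hc.trans hmed, hc, (hbad y hy).ge]
  have hmem : ∀ y, y ≠ ystar → y ≠ ymed → y ∈ Ybad := fun y hys hym ↦
    ((hcover y).resolve_left hys).resolve_left hym
  have horth' : ∀ w ∉ Ybad, ∀ y, y ≠ ystar → y ≠ ymed → ⟪φ w, φ y⟫ = 0 := fun w hw y hys hym ↦
    (real_inner_comm _ _).trans (horth y (hmem y hys hym) w hw)
  suffices key : ∀ t : ℝ, 0 ≤ t → _ from ⟨key,
    antitoneOn_of_exists_hasDerivAt_nonpos (convex_Ici 0) fun t ht ↦ (key t ht).1,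
    monotoneOn_of_exists_hasDerivAt_nonneg (convex_Ici 0) fun t ht ↦ (key t ht).2⟩
  intro t ht
  have hv_bad : ∀ b ∈ Ybad, ⟪φ b, gradient (expReward φ r) (θt t)⟫ ≤ 0 := fun b hb ↦
    inner_gradient_expReward_nonpos hmin (hbad_inner b hb) (horth b hb)
  obtain ⟨hv_med, hv_star⟩ := inner_gradient_expReward_mem_Icc (θ := θt t) hsm hmed
    (fun y hys hym ↦ hmin y (hmem y hys hym) ymed) (horth' ystar hsb) (horth' ymed hmb) hnorm
  refine ⟨⟨_, hasDerivAt_sum_policy_comp (hflow t ht) Ybad,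
      sum_weightedAdvantage_nonpos hv_bad fun y hy ↦ ?_⟩,
    ⟨_, hasDerivAt_policy_comp (hflow t ht) ystar, weightedAdvantage_nonneg fun y ↦ ?_⟩⟩
  · rcases hcover y with rfl | rfl | hy'
    exacts [hv_med.trans hv_star, hv_med, absurd hy' hy]
  · rcases hcover y with rfl | rfl | hy'
    exacts [le_rfl, hv_star, (hv_bad y hy').trans (hv_med.trans hv_star)]

theorem pos_inner_monotone {Y : Type*} [Fintype Y] {D : ℕ}
    (φ : Y → EuclideanSpace ℝ (Fin D)) (hφ : ∀ y, φ y ≠ 0)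
    (rG : Y → ℝ) (hrG : ∀ y, rG y ∈ Set.Icc (-1 : ℝ) 1)
    (ystar ymed ybad : Y) (Ybad : Finset Y) (hybad : ybad ∈ Ybad)
    (hsm : ystar ≠ ymed) (hsb : ystar ∉ Ybad) (hmb : ymed ∉ Ybad)
    (hcover : ∀ y : Y, y = ystar ∨ y = ymed ∨ y ∈ Ybad)
    (hr1 : rG ymed < rG ystar) (hr2 : 0 < rG ymed)
    (hr3 : ∀ y ∈ Ybad, rG y ≤ 0)
    (hr4 : ∀ y ∈ Ybad, rG y = rG ybad)
    (Δ1 Δ2 : ℝ) (hΔ1 : Δ1 = rG ystar - rG ymed) (hΔ2 : Δ2 = rG ymed - rG ybad)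
    (s : ℝ) (hs : s = ⟪φ ystar, φ ymed⟫) (hspos : 0 < s)
    (horthbad : ∀ yb ∈ Ybad, ∀ y : Y, y ≠ yb → ⟪φ yb, φ y⟫ = 0)
    (θt : ℝ → EuclideanSpace ℝ (Fin D))
    (hflow : ∀ t : ℝ, 0 ≤ t → HasDerivAt θt (gradient (expReward φ rG) (θt t)) t)
    (hchain1 : ‖φ ymed‖ ^ 2 < s) (hchain2 : s < ‖φ ystar‖ ^ 2) :
    (∀ t : ℝ, 0 ≤ t →
        (∃ d : ℝ, HasDerivAt (fun τ : ℝ => ∑ y ∈ Ybad, policy φ (θt τ) y) d t ∧ d ≤ 0)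
        ∧ ∃ d : ℝ, HasDerivAt (fun τ : ℝ => policy φ (θt τ) ystar) d t ∧ 0 ≤ d)
    ∧ AntitoneOn (fun t : ℝ => ∑ y ∈ Ybad, policy φ (θt t) y) (Set.Ici 0)
    ∧ MonotoneOn (fun t : ℝ => policy φ (θt t) ystar) (Set.Ici 0) := by
  exact pos_inner_monotone_general φ rG ystar ymed Ybad hsm hsb hmb hcover hr1.le (rG ybad)
    ((hr3 ybad hybad).trans hr2.le) hr4
    (fun b hb y hy ↦ horthbad b hb y (ne_of_mem_of_not_mem hb hy).symm)
    (fun b hb y _ ↦ (eq_or_ne y b).elim (· ▸ real_inner_self_nonneg) (horthbad b hb y · |>.ge))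
    (hchain1.le.trans_eq hs) θt hflow
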